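/- For every (a, b) ∈ Q_k and every y ∈ E_k, the minimax equality inf_{w ∈ M_k} sup_{v ∈ N_{k−1}} I(v + y + w, a, b) = sup_{v ∈ N_{k−1}} inf_{w ∈ M_k} I(v + y + w, a, b) holds; moreover there exist v₀ ∈ N_{k−1} and w₀ ∈ M_k such that u = v₀ + y + w₀ attains this common value, I(u, a, b) being equal to it, and u satisfies ⟨u, z⟩ = ∫_Ω ( b u⁺ − a u⁻ ) z dμ for all z ∈ N_{k−1} and all z ∈ M_k. -/

import Mathlib

open MeasureTheory RealInnerProductSpace

/-!
Freeze `y` and regard `(v, w) ↦ I (v + y + w)` as a functional on `N × M`. The quadratic form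
`∫ b (f⁺)² + a (f⁻)²` lies between its first-order expansions with quadratic errors `min a b ‖g‖²`
and `max a b ‖g‖²`. Since `a` and `b` lie strictly between `lam₀` and `lam₂`, the spectral
inequalities therefore make `I` strongly concave along `N` and strongly convex along `M`.
Consequently the operator `(v, w) ↦ (-∂_v I, ∂_w I)` is Lipschitz and strongly monotone on a Hilbert
space, so it has a zero; by concavity and convexity this zero is a saddle point, and a saddle point
yields the minimax equality.
-/

section StrongMonotone

variable {X : Type*} [NormedAddCommGroup X] [InnerProductSpace ℝ X] {A : X → X} {L : NNReal} {c : ℝ}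

theorem norm_sub_smul_sub_sq_le_of_lipschitzWith (hA : LipschitzWith L A)
    (hmono : ∀ x y, c * ‖x - y‖ ^ 2 ≤ ⟪A x - A y, x - y⟫) {ε : ℝ} (hε : 0 ≤ ε) (x y : X) :
    ‖(x - y) - ε • (A x - A y)‖ ^ 2 ≤ (1 - 2 * (ε * c) + ε ^ 2 * L ^ 2) * ‖x - y‖ ^ 2 := by
  have hLip : ‖A x - A y‖ ^ 2 ≤ L ^ 2 * ‖x - y‖ ^ 2 := by
    rw [← mul_pow]
    gcongr
    exact hA.norm_sub_le x y
  calc ‖(x - y) - ε • (A x - A y)‖ ^ 2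
      = ‖x - y‖ ^ 2 - 2 * (ε * ⟪A x - A y, x - y⟫) + ε ^ 2 * ‖A x - A y‖ ^ 2 := by
        rw [norm_sub_sq_real, inner_smul_right, norm_smul, real_inner_comm, mul_pow,
          Real.norm_eq_abs, sq_abs]
    _ ≤ ‖x - y‖ ^ 2 - 2 * (ε * (c * ‖x - y‖ ^ 2)) + ε ^ 2 * (L ^ 2 * ‖x - y‖ ^ 2) := by
        gcongr
        exact hmono x y
    _ = _ := by ring

theorem surjective_of_lipschitzWith_of_stronglyMonotone [CompleteSpace X]
    (hA : LipschitzWith L A) (hc : 0 < c)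
    (hmono : ∀ x y, c * ‖x - y‖ ^ 2 ≤ ⟪A x - A y, x - y⟫) : Function.Surjective A := by
  intro z
  -- `ε (L² + 1) = c`, so the factor `1 - 2 ε c + ε² L²` is at most `1 - ε c`.
  set ε : ℝ := c / (L ^ 2 + 1) with hε
  have hε_pos : 0 < ε := by positivity
  have hε_mul : ε * (L ^ 2 + 1) = c := by rw [hε]; field_simp
  have hcontr : ContractingWith (√(1 - ε * c)).toNNReal fun x ↦ x - ε • (A x - z) := by
    refine ⟨?_, LipschitzWith.of_dist_le_mul fun x y ↦ ?_⟩
    · rw [Real.toNNReal_lt_one, Real.sqrt_lt' one_pos]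
      nlinarith [mul_pos hε_pos hc]
    · rw [dist_eq_norm, dist_eq_norm, Real.coe_toNNReal _ (Real.sqrt_nonneg _),
        ← Real.sqrt_sq (norm_nonneg (x - y)), ← Real.sqrt_mul' _ (sq_nonneg _)]
      apply Real.le_sqrt_of_sq_le
      calc ‖x - ε • (A x - z) - (y - ε • (A y - z))‖ ^ 2
          = ‖(x - y) - ε • (A x - A y)‖ ^ 2 := by congr 2; module
        _ ≤ (1 - 2 * (ε * c) + ε ^ 2 * L ^ 2) * ‖x - y‖ ^ 2 :=
            norm_sub_smul_sub_sq_le_of_lipschitzWith hA hmono hε_pos.le x y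
        _ ≤ (1 - ε * c) * ‖x - y‖ ^ 2 := by
            gcongr
            nlinarith [sq_nonneg ε]
  have hfix : hcontr.fixedPoint - ε • (A hcontr.fixedPoint - z) = hcontr.fixedPoint :=
    hcontr.fixedPoint_isFixedPt
  refine ⟨hcontr.fixedPoint, sub_eq_zero.1 ?_⟩
  simpa [hε_pos.ne'] using hfix

end StrongMonotone

section SaddlePoint

variable {X Y β : Type*} [ConditionallyCompleteLattice β] {s : Set X} {t : Set Y} {f : X → Y → β}
  {a : X} {b : Y}

theorem csInf_csSup_eq_of_isSaddlePointOn (ha : a ∈ s) (hb : b ∈ t)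
    (hf : ∀ x ∈ s, BddAbove {r | ∃ y ∈ t, r = f x y}) (h : IsSaddlePointOn s t f a b) :
    sInf {q | ∃ x ∈ s, q = sSup {r | ∃ y ∈ t, r = f x y}} = f a b := by
  refine IsLeast.csInf_eq ⟨⟨a, ha, Eq.symm ?_⟩, ?_⟩
  · refine IsGreatest.csSup_eq ⟨⟨b, hb, rfl⟩, ?_⟩
    rintro _ ⟨y, hy, rfl⟩
    exact h a ha y hy
  · rintro _ ⟨x, hx, rfl⟩
    exact (h x hx b hb).trans (le_csSup (hf x hx) ⟨b, hb, rfl⟩)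

theorem csSup_csInf_eq_of_isSaddlePointOn (ha : a ∈ s) (hb : b ∈ t)
    (hf : ∀ y ∈ t, BddBelow {r | ∃ x ∈ s, r = f x y}) (h : IsSaddlePointOn s t f a b) :
    sSup {q | ∃ y ∈ t, q = sInf {r | ∃ x ∈ s, r = f x y}} = f a b :=
  csInf_csSup_eq_of_isSaddlePointOn (β := βᵒᵈ) (f := fun y x ↦ f x y) hb ha hf
    fun y hy x hx ↦ h x hx y hy

end SaddlePoint

section StronglyConvexAlong

variable {H : Type*} [NormedAddCommGroup H] [InnerProductSpace ℝ H]

/-- `J` is strongly convex with modulus `c` in the directions of `M`, in first-order form with `G`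
in the role of the gradient of `J`. Strong concavity along `M` is expressed by applying this to
`-J` and `-G`. -/
def StronglyConvexAlong (J : H → ℝ) (G : H → H) (M : Submodule ℝ H) (c : ℝ) : Prop :=
  ∀ u, ∀ w ∈ M, J u + ⟪G u, w⟫ + c / 2 * ‖w‖ ^ 2 ≤ J (u + w)

namespace StronglyConvexAlong

variable {J : H → ℝ} {G : H → H} {N M : Submodule ℝ H} {c : ℝ}

theorem bddBelow (hM : StronglyConvexAlong J G M c) (hc : 0 < c) (u : H) :
    BddBelow {r | ∃ w ∈ M, r = J (u + w)} := by
  refine ⟨J u - ‖G u‖ ^ 2 / (2 * c), ?_⟩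
  rintro _ ⟨w, hw, rfl⟩
  have hinner : -(‖G u‖ * ‖w‖) ≤ ⟪G u, w⟫ := neg_le_of_abs_le (abs_real_inner_le_norm _ _)
  have hsquare : 0 ≤ (c * ‖w‖ - ‖G u‖) ^ 2 / (2 * c) := by positivity
  have hexpand : (c * ‖w‖ - ‖G u‖) ^ 2 / (2 * c) =
      c / 2 * ‖w‖ ^ 2 - ‖G u‖ * ‖w‖ + ‖G u‖ ^ 2 / (2 * c) := by
    field_simp
    ring
  linarith [hM u w hw]

theorem bddAbove (hN : StronglyConvexAlong (-J) (-G) N c) (hc : 0 < c) (u : H) :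
    BddAbove {r | ∃ v ∈ N, r = J (u + v)} := by
  obtain ⟨l, hl⟩ := hN.bddBelow hc u
  refine ⟨-l, ?_⟩
  rintro _ ⟨v, hv, rfl⟩
  exact le_neg_of_le_neg (hl ⟨v, hv, rfl⟩)

theorem le_of_mem_orthogonal (hM : StronglyConvexAlong J G M c) (hc : 0 ≤ c) {u w : H}
    (hu : G u ∈ Mᗮ) (hw : w ∈ M) : J u ≤ J (u + w) := by
  have hconv := hM u w hw
  rw [Submodule.inner_left_of_mem_orthogonal hw hu] at hconv
  have : 0 ≤ c / 2 * ‖w‖ ^ 2 := by positivity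
  linarith

/-- The gradient inequalities at the corners of the parallelogram `u`, `u + v`, `u + w`,
`u + v + w` add up, the values of `J` cancelling. -/
theorem le_inner_sub (hN : StronglyConvexAlong (-J) (-G) N c) (hM : StronglyConvexAlong J G M c)
    (u : H) {v w : H} (hv : v ∈ N) (hw : w ∈ M) :
    c * (‖v‖ ^ 2 + ‖w‖ ^ 2) ≤ ⟪G (u + v + w) - G u, w - v⟫ := by
  have hM₀ := hM u w hw
  have hM₁ := hM (u + v + w) (-w) (M.neg_mem hw)
  have hN₀ := hN u v hv
  have hN₁ := hN (u + v + w) (-v) (N.neg_mem hv)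
  rw [show u + v + w + -w = u + v by abel] at hM₁
  rw [show u + v + w + -v = u + w by abel] at hN₁
  simp only [Pi.neg_apply, inner_neg_left, inner_neg_right, norm_neg] at hM₁ hN₀ hN₁
  simp only [inner_sub_left, inner_sub_right]
  linarith

theorem exists_mem_orthogonal [CompleteSpace N] [CompleteSpace M]
    (hN : StronglyConvexAlong (-J) (-G) N c) (hM : StronglyConvexAlong J G M c) (hc : 0 < c)
    {L : NNReal} (hG : LipschitzWith L G) (y : H) :
    ∃ v ∈ N, ∃ w ∈ M, G (v + y + w) ∈ Nᗮ ∧ G (v + y + w) ∈ Mᗮ := by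
  let P : H →L[ℝ] WithLp 2 (N × M) := (WithLp.prodContinuousLinearEquiv 2 ℝ N M).symm ∘L
    (-N.orthogonalProjectionOnto).prod M.orthogonalProjectionOnto
  let S : WithLp 2 (N × M) →L[ℝ] H :=
    N.subtypeL.coprod M.subtypeL ∘L WithLp.prodContinuousLinearEquiv 2 ℝ N M
  let A : WithLp 2 (N × M) → WithLp 2 (N × M) := fun z ↦ P (G (y + S z))
  have hP : ∀ (x : H) (d : WithLp 2 (N × M)), ⟪P x, d⟫ = ⟪x, (d.snd : H) - d.fst⟫ := by
    intro x d
    simp only [ContinuousLinearMap.comp_apply, ContinuousLinearMap.prod_apply, neg_apply,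
      ContinuousLinearEquiv.coe_coe, WithLp.prodContinuousLinearEquiv_symm_apply,
      WithLp.prod_inner_apply, WithLp.ofLp_fst, inner_neg_left,
      Submodule.inner_orthogonalProjectionOnto_eq_of_mem_right, WithLp.ofLp_snd, inner_sub_right,
      P]
    ring
  have hlip := P.lipschitz.comp (hG.comp ((LipschitzWith.const y).add S.lipschitz))
  have hmono : ∀ z z', c * ‖z - z'‖ ^ 2 ≤ ⟪A z - A z', z - z'⟫ := by
    intro z z'
    obtain ⟨d, rfl⟩ : ∃ d, z = z' + d := ⟨z - z', by simp⟩
    have hS : y + S (z' + d) = y + S z' + d.fst + d.snd := by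
      rw [map_add, ← add_assoc, add_assoc _ (d.fst : H)]
      rfl
    rw [add_sub_cancel_left, WithLp.prod_norm_sq_eq_of_L2, ← map_sub, hP, hS]
    exact hN.le_inner_sub hM _ d.fst.2 d.snd.2
  obtain ⟨z, hz⟩ := surjective_of_lipschitzWith_of_stronglyMonotone hlip hc hmono 0
  refine ⟨z.fst, z.fst.2, z.snd, z.snd.2, ?_⟩
  have hu : (z.fst : H) + y + z.snd = y + S z := by
    rw [add_comm _ y, add_assoc]
    rfl
  rw [hu, ← Submodule.orthogonalProjectionOnto_eq_zero_iff,
    ← Submodule.orthogonalProjectionOnto_eq_zero_iff]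
  exact ⟨neg_eq_zero.1 (congrArg WithLp.fst hz), congrArg WithLp.snd hz⟩

theorem isSaddlePointOn (hN : StronglyConvexAlong (-J) (-G) N c)
    (hM : StronglyConvexAlong J G M c) (hc : 0 ≤ c) {y v₀ w₀ : H} (hv₀ : v₀ ∈ N) (hw₀ : w₀ ∈ M)
    (hGN : G (v₀ + y + w₀) ∈ Nᗮ) (hGM : G (v₀ + y + w₀) ∈ Mᗮ) :
    IsSaddlePointOn (M : Set H) (N : Set H) (fun w v ↦ J (v + y + w)) w₀ v₀ := by
  intro w hw v hv
  have hmax := hN.le_of_mem_orthogonal hc (neg_mem hGN) (N.sub_mem hv hv₀)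
  have hmin := hM.le_of_mem_orthogonal hc hGM (M.sub_mem hw hw₀)
  rw [show v₀ + y + w₀ + (v - v₀) = v + y + w₀ by abel] at hmax
  rw [show v₀ + y + w₀ + (w - w₀) = v₀ + y + w by abel] at hmin
  exact (neg_le_neg_iff.1 hmax).trans hmin

theorem exists_minimax [CompleteSpace N] [CompleteSpace M]
    (hN : StronglyConvexAlong (-J) (-G) N c) (hM : StronglyConvexAlong J G M c) (hc : 0 < c)
    {L : NNReal} (hG : LipschitzWith L G) (y : H) :
    ∃ v₀ ∈ N, ∃ w₀ ∈ M, G (v₀ + y + w₀) ∈ Nᗮ ∧ G (v₀ + y + w₀) ∈ Mᗮ ∧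
      sInf {t | ∃ w ∈ M, t = sSup {r | ∃ v ∈ N, r = J (v + y + w)}} = J (v₀ + y + w₀) ∧
      sSup {t | ∃ v ∈ N, t = sInf {r | ∃ w ∈ M, r = J (v + y + w)}} = J (v₀ + y + w₀) := by
  obtain ⟨v₀, hv₀, w₀, hw₀, hGN, hGM⟩ := hN.exists_mem_orthogonal hM hc hG y
  have hsaddle := hN.isSaddlePointOn hM hc.le hv₀ hw₀ hGN hGM
  refine ⟨v₀, hv₀, w₀, hw₀, hGN, hGM,
    csInf_csSup_eq_of_isSaddlePointOn hw₀ hv₀ (fun w _ ↦ ?_) hsaddle,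
    csSup_csInf_eq_of_isSaddlePointOn hw₀ hv₀ (fun v _ ↦ hM.bddBelow hc (v + y)) hsaddle⟩
  have hbdd := hN.bddAbove hc (y + w)
  simp only [add_comm (y + w), ← add_assoc] at hbdd
  exact hbdd

end StronglyConvexAlong

end StronglyConvexAlong

section JumpMap

theorem jump_quadratic_le {a b m : ℝ} (ha : m ≤ a) (hb : m ≤ b) (s t : ℝ) :
    (b * s⁺ - a * s⁻) * s + 2 * ((b * s⁺ - a * s⁻) * t) + m * (t * t) ≤
      (b * (s + t)⁺ - a * (s + t)⁻) * (s + t) := by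
  obtain ⟨r, rfl⟩ : ∃ r, t = r - s := ⟨s + t, by ring⟩
  rw [add_sub_cancel]
  have ha := sub_nonneg.2 ha
  have hb := sub_nonneg.2 hb
  rcases le_total 0 s with hs | hs <;> rcases le_total 0 r with hr | hr <;>
    simp only [hs, hr, posPart_of_nonneg, negPart_of_nonneg, posPart_of_nonpos, negPart_of_nonpos]
  · nlinarith [mul_nonneg hb (sq_nonneg (r - s))]
  · nlinarith [mul_nonneg hb (sq_nonneg s), mul_nonneg ha (sq_nonneg r),
      mul_nonneg hb (mul_nonneg hs (neg_nonneg.2 hr))]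
  · nlinarith [mul_nonneg ha (sq_nonneg s), mul_nonneg hb (sq_nonneg r),
      mul_nonneg ha (mul_nonneg hr (neg_nonneg.2 hs))]
  · nlinarith [mul_nonneg ha (sq_nonneg (r - s))]

variable {Ω : Type*} [MeasurableSpace Ω] {μ : Measure Ω}

theorem real_inner_Lp_two_eq_integral_mul (f g : Lp ℝ 2 μ) : ⟪f, g⟫ = ∫ x, f x * g x ∂μ := by
  simp only [L2.inner_def, Real.inner_apply]

/-- The superposition operator `f ↦ b f⁺ - a f⁻` on `L²`, which is half the gradient of
`f ↦ ∫ b (f⁺)² + a (f⁻)²`. -/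
noncomputable def jumpMap (a b : ℝ) (f : Lp ℝ 2 μ) : Lp ℝ 2 μ :=
  b • Lp.posPart f - a • Lp.negPart f

theorem lipschitzWith_jumpMap (a b : ℝ) :
    LipschitzWith (‖b‖₊ + ‖a‖₊) (jumpMap (μ := μ) a b) := by
  have hpos : LipschitzWith 1 fun f : Lp ℝ 2 μ ↦ Lp.posPart f :=
    Lp.lipschitzWith_pos_part.lipschitzWith_compLp (max_self 0)
  have hneg : LipschitzWith 1 fun f : Lp ℝ 2 μ ↦ Lp.negPart f :=
    (hpos.comp LipschitzWith.id.neg).weaken (mul_one 1).le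
  exact (((lipschitzWith_smul b).comp hpos).sub ((lipschitzWith_smul a).comp hneg)).weaken
    (by simp only [mul_one, le_refl])

theorem jumpMap_neg_neg (a b : ℝ) (f : Lp ℝ 2 μ) : jumpMap (-a) (-b) f = -jumpMap a b f := by
  simp only [jumpMap]
  module

theorem coeFn_jumpMap (a b : ℝ) (f : Lp ℝ 2 μ) :
    jumpMap a b f =ᵐ[μ] fun x ↦ b * Lp.posPart f x - a * Lp.negPart f x := by
  filter_upwards [Lp.coeFn_sub (b • Lp.posPart f) (a • Lp.negPart f),
    Lp.coeFn_smul b (Lp.posPart f), Lp.coeFn_smul a (Lp.negPart f)] with x hsub hpos hneg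
  simp only [jumpMap, hsub, Pi.sub_apply, hpos, hneg, Pi.smul_apply, smul_eq_mul]

theorem coeFn_jumpMap_eq_posPart_negPart (a b : ℝ) (f : Lp ℝ 2 μ) :
    jumpMap a b f =ᵐ[μ] fun x ↦ b * (f x)⁺ - a * (f x)⁻ := by
  filter_upwards [coeFn_jumpMap a b f, Lp.coeFn_posPart f, Lp.coeFn_negPart_eq_max f]
    with x hjump hpos hneg
  rw [hjump, hpos, hneg, posPart_def, negPart_def]

theorem inner_jumpMap_eq_integral (a b : ℝ) (f g : Lp ℝ 2 μ) :
    ⟪jumpMap a b f, g⟫ = ∫ x, (b * Lp.posPart f x - a * Lp.negPart f x) * g x ∂μ := by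
  rw [real_inner_Lp_two_eq_integral_mul]
  apply integral_congr_ae
  filter_upwards [coeFn_jumpMap a b f] with x hjump
  rw [hjump]

theorem inner_jumpMap_self_eq_integral (a b : ℝ) (f : Lp ℝ 2 μ) :
    ⟪jumpMap a b f, f⟫ = ∫ x, (b * Lp.posPart f x ^ 2 + a * Lp.negPart f x ^ 2) ∂μ := by
  rw [inner_jumpMap_eq_integral]
  apply integral_congr_ae
  filter_upwards [Lp.coeFn_posPart f, Lp.coeFn_negPart_eq_max f] with x hpos hneg
  rw [hpos, hneg]
  rcases le_total 0 (f x) with hx | hx <;>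
    simp only [hx, max_eq_left, max_eq_right, Left.neg_nonpos_iff, Left.nonneg_neg_iff] <;> ring

theorem le_inner_jumpMap_add_self {a b m : ℝ} (ha : m ≤ a) (hb : m ≤ b) (f g : Lp ℝ 2 μ) :
    ⟪jumpMap a b f, f⟫ + 2 * ⟪jumpMap a b f, g⟫ + m * ‖g‖ ^ 2 ≤
      ⟪jumpMap a b (f + g), f + g⟫ := by
  have hprod (h k : Lp ℝ 2 μ) : Integrable (fun x ↦ h x * k x) μ :=
    (Lp.memLp h).integrable_mul (Lp.memLp k)
  have hff := hprod (jumpMap a b f) f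
  have hfg := (hprod (jumpMap a b f) g).const_mul 2
  have hgg := (hprod g g).const_mul m
  simp only [← real_inner_self_eq_norm_sq, real_inner_Lp_two_eq_integral_mul]
  rw [← integral_const_mul, ← integral_const_mul, ← integral_add hff hfg,
    ← integral_add (hff.fun_add hfg) hgg]
  refine integral_mono_ae ((hff.add hfg).add hgg) (hprod _ _) ?_
  filter_upwards [coeFn_jumpMap_eq_posPart_negPart a b f,
    coeFn_jumpMap_eq_posPart_negPart a b (f + g), Lp.coeFn_add f g] with x hf hfg hadd
  simp only [hfg, hf, hadd, Pi.add_apply]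
  exact jump_quadratic_le ha hb (f x) (g x)

theorem inner_jumpMap_add_self_le {a b K : ℝ} (ha : a ≤ K) (hb : b ≤ K) (f g : Lp ℝ 2 μ) :
    ⟪jumpMap a b (f + g), f + g⟫ ≤
      ⟪jumpMap a b f, f⟫ + 2 * ⟪jumpMap a b f, g⟫ + K * ‖g‖ ^ 2 := by
  have hneg := le_inner_jumpMap_add_self (neg_le_neg ha) (neg_le_neg hb) f g
  simp only [jumpMap_neg_neg, inner_neg_left] at hneg
  linarith

end JumpMap

section JumpFunctional

variable {Ω : Type*} [MeasurableSpace Ω] {μ : Measure Ω}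
  {H : Type*} [NormedAddCommGroup H] [InnerProductSpace ℝ H] (ι : H →L[ℝ] Lp ℝ 2 μ) {a b : ℝ}

/-- The functional `u ↦ ½ ‖u‖² - ½ ∫ b (u⁺)² + a (u⁻)²` on a space `H` mapped to `L²` by `ι`. -/
noncomputable def jumpFunctional (a b : ℝ) (u : H) : ℝ :=
  ‖u‖ ^ 2 / 2 - (∫ x, (b * (Lp.posPart (ι u)) x ^ 2 + a * (Lp.negPart (ι u)) x ^ 2) ∂μ) / 2

theorem jumpFunctional_eq_inner (u : H) :
    jumpFunctional ι a b u = ‖u‖ ^ 2 / 2 - ⟪jumpMap a b (ι u), ι u⟫ / 2 := by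
  rw [jumpFunctional, inner_jumpMap_self_eq_integral]

variable [CompleteSpace H]

/-- The gradient of `jumpFunctional ι a b`. -/
noncomputable def jumpGradient (a b : ℝ) (u : H) : H :=
  u - ι.adjoint (jumpMap a b (ι u))

theorem inner_jumpGradient (u z : H) :
    ⟪jumpGradient ι a b u, z⟫ = ⟪u, z⟫ - ⟪jumpMap a b (ι u), ι z⟫ := by
  rw [jumpGradient, inner_sub_left, ContinuousLinearMap.adjoint_inner_left]

theorem inner_eq_integral_of_jumpGradient_mem_orthogonal {u z : H} {K : Submodule ℝ H}
    (hu : jumpGradient ι a b u ∈ Kᗮ) (hz : z ∈ K) :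
    ⟪u, z⟫ = ∫ x, (b * (Lp.posPart (ι u)) x - a * (Lp.negPart (ι u)) x) * (ι z) x ∂μ := by
  rw [← inner_jumpMap_eq_integral, ← sub_eq_zero, ← inner_jumpGradient,
    Submodule.inner_left_of_mem_orthogonal hz hu]

variable (a b) in
theorem exists_lipschitzWith_jumpGradient : ∃ L, LipschitzWith L (jumpGradient ι a b) :=
  ⟨_, LipschitzWith.id.sub
    (ι.adjoint.lipschitz.comp ((lipschitzWith_jumpMap a b).comp ι.lipschitz))⟩

variable {N M : Submodule ℝ H} {lam c : ℝ}

theorem stronglyConvexAlong_jumpFunctional (hM : ∀ w ∈ M, lam * ‖ι w‖ ^ 2 ≤ ‖w‖ ^ 2) (hc : c ≤ 1)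
    (ha : a ≤ (1 - c) * lam) (hb : b ≤ (1 - c) * lam) :
    StronglyConvexAlong (jumpFunctional ι a b) (jumpGradient ι a b) M c := by
  intro u w hw
  have hjump := inner_jumpMap_add_self_le ha hb (ι u) (ι w)
  have hspec := mul_le_mul_of_nonneg_left (hM w hw) (sub_nonneg.2 hc)
  simp only [jumpFunctional_eq_inner, inner_jumpGradient, map_add, norm_add_sq_real]
  linarith

theorem stronglyConvexAlong_neg_jumpFunctional (hN : ∀ v ∈ N, ‖v‖ ^ 2 ≤ lam * ‖ι v‖ ^ 2)
    (hc : 0 ≤ 1 + c) (ha : (1 + c) * lam ≤ a) (hb : (1 + c) * lam ≤ b) :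
    StronglyConvexAlong (-jumpFunctional ι a b) (-jumpGradient ι a b) N c := by
  intro u v hv
  have hjump := le_inner_jumpMap_add_self ha hb (ι u) (ι v)
  have hspec := mul_le_mul_of_nonneg_left (hN v hv) hc
  simp only [Pi.neg_apply, inner_neg_left, jumpFunctional_eq_inner, inner_jumpGradient, map_add,
    norm_add_sq_real]
  linarith

end JumpFunctional

theorem exists_pos_lt_one_one_add_mul_lt_lt_one_sub_mul {x p q z : ℝ} (hxp : x < p) (hqz : q < z) :
    ∃ c : ℝ, 0 < c ∧ c < 1 ∧ (1 + c) * x < p ∧ q < (1 - c) * z := by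
  have hx : ∀ᶠ c : ℝ in nhds 0, (1 + c) * x < p :=
    ContinuousAt.eventually_lt (by fun_prop) continuousAt_const (by simpa using hxp)
  have hz : ∀ᶠ c : ℝ in nhds 0, q < (1 - c) * z :=
    continuousAt_const.eventually_lt (by fun_prop) (by simpa using hqz)
  have hpos : ∀ᶠ c : ℝ in nhdsWithin 0 (Set.Ioi 0), 0 < c := self_mem_nhdsWithin
  have hone : ∀ᶠ c : ℝ in nhds 0, c < 1 := eventually_lt_nhds one_pos
  exact (hpos.and ((hone.and (hx.and hz)).filter_mono nhdsWithin_le_nhds)).exists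

theorem minimax_equality_on_Ek_general
    {Ω : Type*} [MeasurableSpace Ω] {μ : Measure Ω}
    {H : Type*} [NormedAddCommGroup H] [InnerProductSpace ℝ H] [CompleteSpace H]
    (ι : H →L[ℝ] Lp ℝ 2 μ) {N M : Submodule ℝ H}
    (hN : IsClosed (N : Set H)) (hM : IsClosed (M : Set H)) {lam₀ lam₂ : ℝ}
    (hNspec : ∀ v ∈ N, ‖v‖ ^ 2 ≤ lam₀ * ‖ι v‖ ^ 2)
    (hMspec : ∀ w ∈ M, lam₂ * ‖ι w‖ ^ 2 ≤ ‖w‖ ^ 2)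
    {a b : ℝ} (ha : a ∈ Set.Ioo lam₀ lam₂) (hb : b ∈ Set.Ioo lam₀ lam₂) (y : H) :
    sInf {t : ℝ | ∃ w ∈ M, t = sSup {r : ℝ | ∃ v ∈ N, r = jumpFunctional ι a b (v + y + w)}} =
      sSup {t : ℝ | ∃ v ∈ N, t = sInf {r : ℝ | ∃ w ∈ M, r = jumpFunctional ι a b (v + y + w)}} ∧
    ∃ v₀ ∈ N, ∃ w₀ ∈ M,
      jumpFunctional ι a b (v₀ + y + w₀) = sInf {t : ℝ | ∃ w ∈ M,
        t = sSup {r : ℝ | ∃ v ∈ N, r = jumpFunctional ι a b (v + y + w)}} ∧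
      (∀ z ∈ N, ⟪v₀ + y + w₀, z⟫ = ∫ x, (b * (Lp.posPart (ι (v₀ + y + w₀))) x -
        a * (Lp.negPart (ι (v₀ + y + w₀))) x) * (ι z) x ∂μ) ∧
      (∀ z ∈ M, ⟪v₀ + y + w₀, z⟫ = ∫ x, (b * (Lp.posPart (ι (v₀ + y + w₀))) x -
        a * (Lp.negPart (ι (v₀ + y + w₀))) x) * (ι z) x ∂μ) := by
  have : CompleteSpace N := hN.completeSpace_coe
  have : CompleteSpace M := hM.completeSpace_coe
  obtain ⟨c, hc₀, hc₁, hlow, hhigh⟩ :=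
    exists_pos_lt_one_one_add_mul_lt_lt_one_sub_mul (lt_min ha.1 hb.1) (max_lt ha.2 hb.2)
  have hconcave := stronglyConvexAlong_neg_jumpFunctional ι hNspec (by positivity)
    (hlow.le.trans (min_le_left a b)) (hlow.le.trans (min_le_right a b))
  have hconvex := stronglyConvexAlong_jumpFunctional ι hMspec hc₁.le
    ((le_max_left a b).trans hhigh.le) ((le_max_right a b).trans hhigh.le)
  obtain ⟨L, hL⟩ := exists_lipschitzWith_jumpGradient ι a b
  obtain ⟨v₀, hv₀, w₀, hw₀, hGN, hGM, hinf, hsup⟩ := hconcave.exists_minimax hconvex hc₀ hL y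
  exact ⟨hinf.trans hsup.symm, v₀, hv₀, w₀, hw₀, hinf.symm,
    fun _ ↦ inner_eq_integral_of_jumpGradient_mem_orthogonal ι hGN,
    fun _ ↦ inner_eq_integral_of_jumpGradient_mem_orthogonal ι hGM⟩

theorem minimax_equality_on_Ek
    {Ω : Type*} [MeasurableSpace Ω] (μ : Measure Ω)
    {H : Type*} [NormedAddCommGroup H] [InnerProductSpace ℝ H] [CompleteSpace H]
    (ι : H →ₗ[ℝ] Lp ℝ 2 μ) (hι : Function.Injective ι)
    (C : ℝ) (hC : 0 < C) (hιC : ∀ u : H, ‖ι u‖ ≤ C * ‖u‖)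
    (I : H → ℝ → ℝ → ℝ)
    (hI : ∀ u a b, I u a b = ‖u‖ ^ 2 / 2 -
      (∫ x, (b * (Lp.posPart (ι u)) x ^ 2 + a * (Lp.negPart (ι u)) x ^ 2) ∂μ) / 2)
    (lam₀ lam₁ lam₂ : ℝ) (hlam₀ : 0 < lam₀) (hlam₀₁ : lam₀ < lam₁) (hlam₁₂ : lam₁ < lam₂)
    (N E M : Submodule ℝ H)
    (hNcl : IsClosed (N : Set H)) (hEcl : IsClosed (E : Set H)) (hMcl : IsClosed (M : Set H))
    (hNfd : FiniteDimensional ℝ N) (hEfd : FiniteDimensional ℝ E) (hEne : E ≠ ⊥)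
    (horthNE : ∀ v ∈ N, ∀ y ∈ E, ⟪v, y⟫ = 0)
    (horthNM : ∀ v ∈ N, ∀ w ∈ M, ⟪v, w⟫ = 0)
    (horthEM : ∀ y ∈ E, ∀ w ∈ M, ⟪y, w⟫ = 0)
    (horthNE2 : ∀ v ∈ N, ∀ y ∈ E, ∫ x, (ι v) x * (ι y) x ∂μ = 0)
    (horthNM2 : ∀ v ∈ N, ∀ w ∈ M, ∫ x, (ι v) x * (ι w) x ∂μ = 0)
    (horthEM2 : ∀ y ∈ E, ∀ w ∈ M, ∫ x, (ι y) x * (ι w) x ∂μ = 0)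
    (hdirect : N ⊔ E ⊔ M = ⊤)
    (hNspec : ∀ v ∈ N, ‖v‖ ^ 2 ≤ lam₀ * ‖ι v‖ ^ 2)
    (hEspec : ∀ y ∈ E, ∀ u : H, ⟪y, u⟫ = lam₁ * ∫ x, (ι y) x * (ι u) x ∂μ)
    (hMspec : ∀ w ∈ M, lam₂ * ‖ι w‖ ^ 2 ≤ ‖w‖ ^ 2)
    (hcompact : ∀ s : Set H, Bornology.IsBounded s →
      IsCompact (closure ((fun u => ι u) '' s)))
    :
    ∀ a b, a ∈ Set.Ioo lam₀ lam₂ → b ∈ Set.Ioo lam₀ lam₂ → ∀ y ∈ E,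
      sInf {t : ℝ | ∃ w ∈ M, t = sSup {r : ℝ | ∃ v ∈ N, r = I (v + y + w) a b}} =
        sSup {t : ℝ | ∃ v ∈ N, t = sInf {r : ℝ | ∃ w ∈ M, r = I (v + y + w) a b}} ∧
      ∃ v₀ ∈ N, ∃ w₀ ∈ M,
        I (v₀ + y + w₀) a b =
          sInf {t : ℝ | ∃ w ∈ M, t = sSup {r : ℝ | ∃ v ∈ N, r = I (v + y + w) a b}} ∧
        (∀ z ∈ N, ⟪v₀ + y + w₀, z⟫ = ∫ x,
          (b * (Lp.posPart (ι (v₀ + y + w₀))) x -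
            a * (Lp.negPart (ι (v₀ + y + w₀))) x) * (ι z) x ∂μ) ∧
        (∀ z ∈ M, ⟪v₀ + y + w₀, z⟫ = ∫ x,
          (b * (Lp.posPart (ι (v₀ + y + w₀))) x -
            a * (Lp.negPart (ι (v₀ + y + w₀))) x) * (ι z) x ∂μ) := by
  intro a b ha hb y _
  obtain rfl : I = fun u a b ↦ jumpFunctional (ι.mkContinuous C hιC) a b u := funext₃ hI
  exact minimax_equality_on_Ek_general (ι.mkContinuous C hιC) hNcl hMcl hNspec hMspec ha hb y
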